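/- Let ψ: ℕ → (0,∞) with ψ(n) → ∞ and ψ(n)/n → ∞. Then the set E_sup(ψ) = { x ∈ (0,1] : limsup_{n→∞} (log d_n(x))/ψ(n) = 1 } has Hausdorff dimension 1/(1 + A), where log A = liminf_{n→∞} (log ψ(n))/n. -/

import Mathlib

open Filter Topology Real Set ENNReal

/-- The first Lüroth digit: `d₁(x) = ⌊1/x⌋ + 1`. -/
noncomputable def lurothD1 (x : ℝ) : ℕ := ⌊1 / x⌋₊ + 1

/-- The Lüroth map `T(x) = d₁(x)(d₁(x)-1)(x - 1/d₁(x))`. -/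
noncomputable def lurothT (x : ℝ) : ℝ :=
  (lurothD1 x : ℝ) * ((lurothD1 x : ℝ) - 1) * (x - 1 / (lurothD1 x : ℝ))

/-- The `n`-th Lüroth digit `dₙ(x) = d₁(T^{n-1}(x))`. -/
noncomputable def lurothDigit (n : ℕ) (x : ℝ) : ℕ := lurothD1 (lurothT^[n - 1] x)

lemma two_le_lurothD1 {x : ℝ} (hx : x ∈ Ioc (0 : ℝ) 1) : 2 ≤ lurothD1 x := by
  have : 1 ≤ ⌊1 / x⌋₊ := by
    rw [Nat.one_le_floor_iff]
    exact one_le_one_div hx.1 hx.2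
  unfold lurothD1
  omega

lemma one_div_lurothD1_lt {x : ℝ} (hx : x ∈ Ioc (0 : ℝ) 1) : 1 / (lurothD1 x : ℝ) < x := by
  have h := Nat.lt_floor_add_one (1 / x)
  have h2 : (0 : ℝ) < lurothD1 x := by
    exact_mod_cast (two_le_lurothD1 hx).trans' (by norm_num)
  rw [div_lt_iff₀ h2]
  rw [div_lt_iff₀ hx.1] at h
  unfold lurothD1
  push_cast
  linarith

lemma le_one_div_lurothD1_sub_one {x : ℝ} (hx : x ∈ Ioc (0 : ℝ) 1) :
    x ≤ 1 / ((lurothD1 x : ℝ) - 1) := by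
  have h := Nat.floor_le (one_div_nonneg.2 hx.1.le)
  have h2 : (2 : ℝ) ≤ lurothD1 x := by exact_mod_cast two_le_lurothD1 hx
  rw [le_div_iff₀ (by linarith)]
  rw [le_div_iff₀ hx.1] at h
  unfold lurothD1
  push_cast
  linarith

lemma lurothT_mem {x : ℝ} (hx : x ∈ Ioc (0 : ℝ) 1) : lurothT x ∈ Ioc (0 : ℝ) 1 := by
  have h2 : (2 : ℝ) ≤ lurothD1 x := by exact_mod_cast two_le_lurothD1 hx
  have h3 := one_div_lurothD1_lt hx
  have h4 := le_one_div_lurothD1_sub_one hx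
  have h5 : 0 < (lurothD1 x : ℝ) * ((lurothD1 x : ℝ) - 1) := by nlinarith
  refine ⟨mul_pos h5 (by linarith), ?_⟩
  calc lurothT x ≤ (lurothD1 x : ℝ) * ((lurothD1 x : ℝ) - 1) *
        (1 / ((lurothD1 x : ℝ) - 1) - 1 / (lurothD1 x : ℝ)) := by
        unfold lurothT; gcongr
    _ = 1 := by
        have : (lurothD1 x : ℝ) - 1 ≠ 0 := by linarith
        have : (lurothD1 x : ℝ) ≠ 0 := by linarith
        field_simp
        ring

lemma lurothT_iterate_mem {x : ℝ} (hx : x ∈ Ioc (0 : ℝ) 1) (n : ℕ) :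
    lurothT^[n] x ∈ Ioc (0 : ℝ) 1 := by
  induction n with
  | zero => exact hx
  | succ n ih => rw [Function.iterate_succ_apply']; exact lurothT_mem ih

lemma lurothD1_eq {d : ℕ} {x : ℝ} (hd : 2 ≤ d) (h1 : 1 / (d : ℝ) < x)
    (h2 : x ≤ 1 / ((d : ℝ) - 1)) : lurothD1 x = d := by
  have hd' : (2 : ℝ) ≤ d := by exact_mod_cast hd
  have hx : 0 < x := lt_trans (by positivity) h1
  have : ⌊1 / x⌋₊ = d - 1 := by
    rw [Nat.floor_eq_iff (by positivity)]
    have e : ((d - 1 : ℕ) : ℝ) = (d : ℝ) - 1 := by push_cast [Nat.cast_sub (by omega : 1 ≤ d)]; ring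
    rw [e]
    constructor
    · rw [le_div_iff₀ hx]
      rwa [le_div_iff₀' (by linarith)] at h2
    · rw [div_lt_iff₀ hx]
      rw [div_lt_iff₀ (by linarith)] at h1
      linarith
  unfold lurothD1
  omega

/-- The difference of two points scales by `1 / (d (d - 1))` along a common first digit `d`. -/
lemma abs_sub_eq_of_lurothD1_eq {x y : ℝ} (hx : x ∈ Ioc (0 : ℝ) 1)
    (h : lurothD1 x = lurothD1 y) :
    |x - y| = |lurothT x - lurothT y| / ((lurothD1 x : ℝ) * ((lurothD1 x : ℝ) - 1)) := by
  have h2 : (2 : ℝ) ≤ lurothD1 x := by exact_mod_cast two_le_lurothD1 hx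
  have h5 : 0 < (lurothD1 x : ℝ) * ((lurothD1 x : ℝ) - 1) := by nlinarith
  have : lurothT x - lurothT y = (lurothD1 x : ℝ) * ((lurothD1 x : ℝ) - 1) * (x - y) := by
    unfold lurothT; rw [← h]; ring
  rw [this, abs_mul, abs_of_pos h5]
  exact (mul_div_cancel_left₀ _ h5.ne').symm

lemma abs_sub_eq_prod {n : ℕ} : ∀ {x y : ℝ}, x ∈ Ioc (0 : ℝ) 1 → y ∈ Ioc (0 : ℝ) 1 →
    (∀ i < n, lurothD1 (lurothT^[i] x) = lurothD1 (lurothT^[i] y)) →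
    |x - y| = |lurothT^[n] x - lurothT^[n] y| *
      ∏ i ∈ Finset.range n, ((lurothD1 (lurothT^[i] x) : ℝ) *
        ((lurothD1 (lurothT^[i] x) : ℝ) - 1))⁻¹ := by
  induction n with
  | zero => intros; simp
  | succ n ih =>
    intro x y hx hy h
    rw [ih hx hy (fun i hi => h i (by omega)), Finset.prod_range_succ,
      abs_sub_eq_of_lurothD1_eq (lurothT_iterate_mem hx n) (h n (by omega)),
      Function.iterate_succ_apply', Function.iterate_succ_apply']
    ring

lemma tsum_pi_prod_eq_pow (f : ℕ → ℝ≥0∞) (n : ℕ) :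
    ∑' w : Fin n → ℕ, ∏ i, f (w i) = (∑' k, f k) ^ n := by
  induction n with
  | zero => simp
  | succ n ih =>
    rw [← (Fin.consEquiv (fun _ : Fin (n + 1) => ℕ)).tsum_eq]
    rw [ENNReal.tsum_prod']
    simp only [Fin.consEquiv_apply, Fin.prod_univ_succ, Fin.cons_zero, Fin.cons_succ,
      ENNReal.tsum_mul_left, ih, ENNReal.tsum_mul_right]
    exact (pow_succ' _ _).symm

/-- The image of an interval under a map with Hölder inverse of exponent `s` has dimension at
least `s`. -/
lemma le_dimH_image_of_abs_sub_le {g : ℝ → ℝ} {C s : NNReal} (hs : 0 < s)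
    (h : ∀ y ∈ Ico (0 : ℝ) 1, ∀ z ∈ Ico (0 : ℝ) 1, |y - z| ≤ C * |g y - g z| ^ (s : ℝ)) :
    (s : ℝ≥0∞) ≤ dimH (g '' Ico (0 : ℝ) 1) := by
  have hinj : InjOn g (Ico (0 : ℝ) 1) := by
    intro y hy z hz e
    have := h y hy z hz
    rw [e, sub_self, abs_zero, Real.zero_rpow (by exact_mod_cast hs.ne'), mul_zero] at this
    linarith [abs_nonpos_iff.1 this]
  have hH : HolderOnWith C s (Function.invFunOn g (Ico (0 : ℝ) 1)) (g '' Ico (0 : ℝ) 1) := by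
    rintro _ ⟨y, hy, rfl⟩ _ ⟨z, hz, rfl⟩
    rw [hinj.leftInvOn_invFunOn hy, hinj.leftInvOn_invFunOn hz, edist_dist, edist_dist,
      Real.dist_eq, Real.dist_eq, ENNReal.ofReal_rpow_of_nonneg (abs_nonneg _) s.coe_nonneg,
      ← ENNReal.ofReal_coe_nnreal, ← ENNReal.ofReal_mul C.coe_nonneg]
    exact ENNReal.ofReal_le_ofReal (h y hy z hz)
  have h1 := hH.dimH_image_le hs
  rw [hinj.leftInvOn_invFunOn.image_image] at h1
  have h2 : dimH (Ico (0 : ℝ) 1) = 1 := by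
    have := Real.dimH_of_nonempty_interior (s := Ico (0 : ℝ) 1) (by simp)
    simpa using this
  rw [h2] at h1
  rwa [ENNReal.le_div_iff_mul_le (by simp [hs.ne']) (by simp), one_mul] at h1

/-- Points whose first `m` digits are `w` and whose next digit is large. -/
def lurothBlock (b ε : ℝ) (m : ℕ) (w : Fin m → ℕ) : Set ℝ :=
  {x | x ∈ Ioc (0 : ℝ) 1 ∧ (∀ i : Fin m, lurothD1 (lurothT^[i] x) = w i) ∧
    ∏ i, (2 / ε * (w i : ℝ) ^ (b - 1)) ≤ (lurothD1 (lurothT^[m] x) : ℝ)}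

lemma lurothBlock_abs_sub_le {b ε : ℝ} (hε : 0 < ε) {m : ℕ} {w : Fin m → ℕ}
    {x y : ℝ} (hx : x ∈ lurothBlock b ε m w) (hy : y ∈ lurothBlock b ε m w) :
    |x - y| ≤ 2 * ∏ i, (ε * (w i : ℝ) ^ (-(1 + b))) := by
  have hw : ∀ i, (2 : ℝ) ≤ w i := by
    intro i
    rw [← hx.2.1 i]
    exact_mod_cast two_le_lurothD1 (lurothT_iterate_mem hx.1 i)
  have hwpos : ∀ i, (0 : ℝ) < w i := fun i => by linarith [hw i]
  set Q := ∏ i, (2 / ε * (w i : ℝ) ^ (b - 1)) with hQ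
  have hQpos : 0 < Q := Finset.prod_pos fun i _ => by have := hwpos i; positivity
  have key : ∀ z ∈ lurothBlock b ε m w, lurothT^[m] z ∈ Ioc 0 (2 / Q) := by
    intro z hz
    have hm := lurothT_iterate_mem hz.1 m
    refine ⟨hm.1, (le_one_div_lurothD1_sub_one hm).trans ?_⟩
    have h2 : (2 : ℝ) ≤ lurothD1 (lurothT^[m] z) := by exact_mod_cast two_le_lurothD1 hm
    have h3 : Q ≤ lurothD1 (lurothT^[m] z) := hz.2.2
    rw [div_le_div_iff₀ (by linarith) hQpos]
    linarith
  have hd : |lurothT^[m] x - lurothT^[m] y| ≤ 2 / Q := by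
    have h1 := key x hx
    have h2 := key y hy
    rw [abs_le]
    constructor <;> linarith [h1.1, h1.2, h2.1, h2.2]
  have hxy := abs_sub_eq_prod (n := m) hx.1 hy.1 (fun i hi => by
    rw [hx.2.1 ⟨i, hi⟩, hy.2.1 ⟨i, hi⟩])
  rw [hxy, Finset.prod_range]
  calc _ ≤ 2 / Q * ∏ i : Fin m, ((lurothD1 (lurothT^[i] x) : ℝ) *
        ((lurothD1 (lurothT^[i] x) : ℝ) - 1))⁻¹ := by
        refine mul_le_mul_of_nonneg_right hd (Finset.prod_nonneg fun i _ => ?_)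
        rw [hx.2.1 i]
        have := hw i
        rw [inv_nonneg]
        nlinarith
    _ = 2 * ∏ i : Fin m, ((2 / ε * (w i : ℝ) ^ (b - 1))⁻¹ * ((w i : ℝ) * ((w i : ℝ) - 1))⁻¹) := by
        have e : ∏ i, (2 / ε * (w i : ℝ) ^ (b - 1))⁻¹ = Q⁻¹ := Finset.prod_inv_distrib _
        rw [Finset.prod_mul_distrib, e, div_eq_mul_inv, mul_assoc]
        simp only [hx.2.1]
    _ ≤ _ := by
        refine mul_le_mul_of_nonneg_left (Finset.prod_le_prod (fun i _ => ?_) fun i _ => ?_)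
          (by norm_num)
        · have := hw i
          have : 0 ≤ (w i : ℝ) * ((w i : ℝ) - 1) := by nlinarith
          have := hwpos i
          positivity
        · have h2 := hw i
          have h0 := hwpos i
          have e : (w i : ℝ) ^ (-(1 + b)) = ((w i : ℝ) ^ (b - 1) * (w i : ℝ) ^ 2)⁻¹ := by
            rw [← Real.rpow_natCast, ← Real.rpow_add h0, ← Real.rpow_neg h0.le]
            congr 1
            push_cast
            ring
          rw [e, ← mul_inv, show ε * ((w i : ℝ) ^ (b - 1) * (w i : ℝ) ^ 2)⁻¹ =
            (2 / ε * (w i : ℝ) ^ (b - 1) * ((w i : ℝ) ^ 2 / 2))⁻¹ by field_simp]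
          have hp : 0 < 2 / ε * (w i : ℝ) ^ (b - 1) := by positivity
          refine inv_anti₀ (by positivity) (mul_le_mul_of_nonneg_left ?_ hp.le)
          nlinarith

lemma ediam_lurothBlock_rpow_le {b ε s : ℝ} (hε : 0 < ε) (hs : 0 < s) (m : ℕ) (w : Fin m → ℕ) :
    Metric.ediam (lurothBlock b ε m w) ^ s ≤
      ENNReal.ofReal (2 ^ s) * ∏ i, ENNReal.ofReal ((ε * (w i : ℝ) ^ (-(1 + b))) ^ s) := by
  have hpos : ∀ i, 0 ≤ ε * (w i : ℝ) ^ (-(1 + b)) := fun i => by positivity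
  have h := Metric.ediam_le_of_forall_dist_le
    (fun x hx y hy => lurothBlock_abs_sub_le (b := b) hε (w := w) hx hy)
  refine (ENNReal.rpow_le_rpow h hs.le).trans (le_of_eq ?_)
  rw [ENNReal.ofReal_rpow_of_nonneg (mul_nonneg zero_le_two (Finset.prod_nonneg fun i _ => hpos i))
    hs.le, Real.mul_rpow zero_le_two (Finset.prod_nonneg fun i _ => hpos i),
    ENNReal.ofReal_mul (by positivity), ← Real.finsetProd_rpow _ _ (fun i _ => hpos i),
    ENNReal.ofReal_prod_of_nonneg (fun i _ => Real.rpow_nonneg (hpos i) _)]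

lemma ediam_lurothBlock_le {b ε : ℝ} (hb : 1 ≤ b) (hε : 0 < ε) (hε' : ε ≤ 1 / 2) (m : ℕ)
    (w : Fin m → ℕ) :
    Metric.ediam (lurothBlock b ε m w) ≤ ENNReal.ofReal (2 * (1 / 2) ^ m) := by
  refine Metric.ediam_le_of_forall_dist_le fun x hx y hy => ?_
  refine (lurothBlock_abs_sub_le hε hx hy).trans ?_
  refine mul_le_mul_of_nonneg_left ?_ zero_le_two
  refine (Finset.prod_le_prod (g := fun _ => (1 / 2 : ℝ)) (fun i _ => by positivity)
    fun i _ => ?_).trans (by simp)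
  have hw : (1 : ℝ) ≤ w i := by
    rw [← hx.2.1 i]
    exact_mod_cast (two_le_lurothD1 (lurothT_iterate_mem hx.1 i)).trans' one_le_two
  have := Real.rpow_le_one_of_one_le_of_nonpos hw (by linarith : -(1 + b) ≤ 0)
  have := Real.rpow_nonneg (zero_le_one.trans hw) (-(1 + b))
  nlinarith

lemma exists_tsum_rpow_le_half {b s : ℝ} (hs : 0 < s) (hq : 1 < (1 + b) * s) :
    ∃ ε : ℝ, 0 < ε ∧ ε ≤ 1 / 2 ∧
      ∑' k : ℕ, ENNReal.ofReal ((ε * (k : ℝ) ^ (-(1 + b))) ^ s) ≤ 2⁻¹ := by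
  have hsum : Summable fun k : ℕ => (k : ℝ) ^ (-((1 + b) * s)) := by
    rw [Real.summable_nat_rpow]; linarith
  set Z := ∑' k : ℕ, (k : ℝ) ^ (-((1 + b) * s)) with hZ
  have hZ0 : 0 ≤ Z := tsum_nonneg fun k => by positivity
  have hlim : Tendsto (fun ε : ℝ => ε ^ s * Z) (𝓝[>] 0) (𝓝 0) := by
    have : Tendsto (fun ε : ℝ => ε ^ s * Z) (𝓝 0) (𝓝 ((0 : ℝ) ^ s * Z)) :=
      ((Real.continuousAt_rpow_const 0 s (Or.inr hs.le)).tendsto).mul_const Z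
    rw [Real.zero_rpow hs.ne', zero_mul] at this
    exact this.mono_left nhdsWithin_le_nhds
  obtain ⟨ε, h1, h2, h3⟩ := ((hlim.eventually_le_const (by norm_num : (0 : ℝ) < 1 / 2)).and
    ((eventually_mem_nhdsWithin).and (eventually_nhdsWithin_of_eventually_nhds
      (eventually_le_nhds (by norm_num : (0 : ℝ) < 1 / 2))))).exists
  have h2' : 0 < ε := h2
  refine ⟨ε, h2', h3, ?_⟩
  have e : ∀ k : ℕ, (ε * (k : ℝ) ^ (-(1 + b))) ^ s = ε ^ s * (k : ℝ) ^ (-((1 + b) * s)) := by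
    intro k
    rw [Real.mul_rpow h2'.le (by positivity), ← Real.rpow_mul (by positivity), neg_mul]
  simp only [e]
  rw [← ENNReal.ofReal_tsum_of_nonneg (fun k => by positivity) (hsum.mul_left _), tsum_mul_left,
    ← hZ, show (2⁻¹ : ℝ≥0∞) = ENNReal.ofReal (1 / 2) by
      rw [one_div, ENNReal.ofReal_inv_of_pos two_pos]; simp]
  exact ENNReal.ofReal_le_ofReal h1

lemma dimH_le_of_frequently_log_lurothD1 {b : ℝ} {s : NNReal} (hb : 1 ≤ b)
    (hq : 1 < (1 + b) * s) {F : Set ℝ} (hF : F ⊆ Ioc 0 1)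
    (h : ∀ K : ℝ, ∀ x ∈ F, ∃ᶠ n : ℕ in atTop,
      (b - 1) * ∑ i ∈ Finset.range n, Real.log (lurothD1 (lurothT^[i] x)) + K * n ≤
        Real.log (lurothD1 (lurothT^[n] x))) :
    dimH F ≤ s := by
  have hs : (0 : ℝ) < s := by
    by_contra hs
    nlinarith [s.coe_nonneg]
  obtain ⟨ε, hε, hε', hsum⟩ := exists_tsum_rpow_le_half hs hq
  apply dimH_le_of_hausdorffMeasure_ne_top
  have hcov : ∀ m : ℕ, F ⊆ ⋃ p : (Σ n : ℕ, (Fin (m + n) → ℕ)), lurothBlock b ε (m + p.1) p.2 := by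
    intro m x hx
    obtain ⟨N, hN, hlog⟩ := (frequently_atTop.1 (h (Real.log (2 / ε)) x hx)) m
    obtain ⟨n, rfl⟩ := Nat.exists_eq_add_of_le hN
    refine mem_iUnion.2 ⟨⟨n, fun i => lurothD1 (lurothT^[i] x)⟩, hF hx, fun i => rfl, ?_⟩
    have hd : ∀ i, (0 : ℝ) < lurothD1 (lurothT^[i] x) := fun i => by
      exact_mod_cast (two_le_lurothD1 (lurothT_iterate_mem (hF hx) i)).trans' (by norm_num)
    have hf : ∀ i, 0 < 2 / ε * (lurothD1 (lurothT^[i] x) : ℝ) ^ (b - 1) := fun i => by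
      have := hd i
      positivity
    rw [← Finset.prod_range fun i => 2 / ε * (lurothD1 (lurothT^[i] x) : ℝ) ^ (b - 1),
      ← Real.log_le_log_iff (Finset.prod_pos fun i _ => hf i) (hd _),
      Real.log_prod (fun i _ => (hf i).ne')]
    refine le_trans (le_of_eq ?_) hlog
    rw [Finset.mul_sum, mul_comm (Real.log (2 / ε)), ← nsmul_eq_mul, ← Finset.card_range (m + n),
      ← Finset.sum_const, Finset.card_range, ← Finset.sum_add_distrib]
    refine Finset.sum_congr rfl fun i _ => ?_
    have := hd i
    rw [Real.log_mul (by positivity) (by positivity), Real.log_rpow this, add_comm]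
  have hr : Tendsto (fun m : ℕ => ENNReal.ofReal (2 * (1 / 2) ^ m)) atTop (𝓝 0) := by
    have : Tendsto (fun m : ℕ => (2 : ℝ) * (1 / 2) ^ m) atTop (𝓝 (2 * 0)) :=
      (_root_.tendsto_pow_atTop_nhds_zero_of_lt_one (by norm_num) (by norm_num)).const_mul _
    simpa using ENNReal.tendsto_ofReal this
  have hmain := MeasureTheory.Measure.hausdorffMeasure_le_liminf_tsum (s : ℝ) F
    (fun m : ℕ => ENNReal.ofReal (2 * (1 / 2) ^ m)) hr
    (fun (m : ℕ) (p : Σ n : ℕ, (Fin (m + n) → ℕ)) => lurothBlock b ε (m + p.1) p.2)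
    (Eventually.of_forall fun m p => (ediam_lurothBlock_le hb hε hε' _ _).trans
      (ENNReal.ofReal_le_ofReal (mul_le_mul_of_nonneg_left
        (pow_le_pow_of_le_one (by norm_num) (by norm_num) (Nat.le_add_right _ _)) zero_le_two)))
    (Eventually.of_forall hcov)
  have hbound : ∀ m : ℕ, ∑' p : (Σ n : ℕ, (Fin (m + n) → ℕ)),
      Metric.ediam (lurothBlock b ε (m + p.1) p.2) ^ (s : ℝ) ≤
        ENNReal.ofReal (2 ^ (s : ℝ)) * 2 := by
    intro m
    rw [ENNReal.tsum_sigma']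
    calc _ ≤ ∑' n : ℕ, ENNReal.ofReal (2 ^ (s : ℝ)) * 2⁻¹ ^ n := by
          refine ENNReal.tsum_le_tsum fun n => ?_
          refine (ENNReal.tsum_le_tsum fun w => ediam_lurothBlock_rpow_le hε hs _ w).trans ?_
          rw [ENNReal.tsum_mul_left, tsum_pi_prod_eq_pow
            (fun k : ℕ => ENNReal.ofReal ((ε * (k : ℝ) ^ (-(1 + b))) ^ (s : ℝ)))]
          refine mul_le_mul' le_rfl ?_
          refine (pow_le_pow_left₀ zero_le hsum _).trans ?_
          exact pow_le_pow_right_of_le_one' (by simp) (Nat.le_add_left _ _)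
      _ = _ := by
          rw [ENNReal.tsum_mul_left, ENNReal.tsum_geometric, ENNReal.one_sub_inv_two, inv_inv]
  have hfin : ENNReal.ofReal (2 ^ (s : ℝ)) * 2 ≠ ⊤ :=
    ENNReal.mul_ne_top ENNReal.ofReal_ne_top ENNReal.ofNat_ne_top
  refine ne_top_of_le_ne_top hfin (hmain.trans ?_)
  exact (liminf_le_liminf (Eventually.of_forall hbound)).trans (by simp)

/-- A nonnegative sequence exceeding `c B ^ (n + 1)` infinitely often also exceeds
`(b - 1)` times its partial sums plus `K n` infinitely often, for every `b < B`. -/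
lemma frequently_sum_le_of_frequently_pow_le {u : ℕ → ℝ} (hu : ∀ n, 0 ≤ u n) {b B c : ℝ}
    (hb : 1 < b) (hbB : b < B) (hc : 0 < c) (h : ∃ᶠ n : ℕ in atTop, c * B ^ (n + 1) ≤ u n)
    (K : ℝ) :
    ∃ᶠ n : ℕ in atTop, (b - 1) * ∑ i ∈ Finset.range n, u i + K * n ≤ u n := by
  wlog hK : 0 ≤ K generalizing K
  · refine (this 0 le_rfl).mono fun n hn => ?_
    have : K * n ≤ 0 := mul_nonpos_of_nonpos_of_nonneg (not_le.1 hK).le n.cast_nonneg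
    linarith
  by_contra hcon
  rw [not_frequently] at hcon
  obtain ⟨n₀, hn₀⟩ := eventually_atTop.1 hcon
  have hb1 : 0 < b - 1 := by linarith
  set α := K / (b - 1) with hα
  set β := α / (b - 1) with hβ
  have eα : α * (b - 1) = K := div_mul_cancel₀ _ hb1.ne'
  have eβ : β * (b - 1) = α := div_mul_cancel₀ _ hb1.ne'
  have hα0 : 0 ≤ α := by positivity
  have hβ0 : 0 ≤ β := by positivity
  set V : ℕ → ℝ := fun n => ∑ i ∈ Finset.range n, u i + α * n + β with hV
  have hstep : ∀ n, n₀ ≤ n → V (n + 1) ≤ b * V n := by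
    intro n hn
    have := not_le.1 (hn₀ n hn)
    simp only [hV, Finset.sum_range_succ]
    push_cast
    nlinarith
  have hgrow : ∀ k, V (n₀ + k) ≤ V n₀ * b ^ k := by
    intro k
    induction k with
    | zero => simp
    | succ k ih =>
      calc V (n₀ + k + 1) ≤ b * V (n₀ + k) := hstep _ (Nat.le_add_right _ _)
        _ ≤ b * (V n₀ * b ^ k) := by gcongr
        _ = _ := by ring
  have hV0 : 0 ≤ V n₀ := by
    have := Finset.sum_nonneg fun i (_ : i ∈ Finset.range n₀) => hu i
    positivity
  have hub : ∀ n, n₀ ≤ n → u n ≤ V n₀ * b ^ (n + 1) := by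
    intro n hn
    have h1 : u n ≤ V (n + 1) := by
      have := Finset.sum_nonneg fun i (_ : i ∈ Finset.range n) => hu i
      simp only [hV, Finset.sum_range_succ]
      have : 0 ≤ α * ((n + 1 : ℕ) : ℝ) := by positivity
      linarith
    obtain ⟨k, rfl⟩ := Nat.exists_eq_add_of_le hn
    refine h1.trans ((hgrow (k + 1)).trans ?_)
    gcongr
    · exact hb.le
    · omega
  have hlim : Tendsto (fun n : ℕ => V n₀ * (b / B) ^ (n + 1)) atTop (𝓝 (V n₀ * 0)) :=
    ((_root_.tendsto_pow_atTop_nhds_zero_of_lt_one (div_nonneg (by linarith) (by linarith))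
      ((div_lt_one (by linarith)).2 hbB)).comp (tendsto_add_atTop_nat 1)).const_mul _
  rw [mul_zero] at hlim
  obtain ⟨n, h1, h2, h3⟩ := (h.and_eventually
    ((hlim.eventually_lt_const hc).and (eventually_ge_atTop n₀))).exists
  have hB : 0 < B ^ (n + 1) := pow_pos (by linarith) _
  have h4 := hub n h3
  rw [div_pow, mul_div_assoc', div_lt_iff₀ hB] at h2
  linarith

/-- The Lüroth series with digit sequence `D`. -/
noncomputable def lurothSum (D : ℕ → ℕ) : ℝ :=
  ∑' n, (D n : ℝ)⁻¹ * ∏ i ∈ Finset.range n, ((D i : ℝ) * ((D i : ℝ) - 1))⁻¹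

lemma lurothSum_term_nonneg {D : ℕ → ℕ} (hD : ∀ i, 2 ≤ D i) (n : ℕ) :
    0 ≤ (D n : ℝ)⁻¹ * ∏ i ∈ Finset.range n, ((D i : ℝ) * ((D i : ℝ) - 1))⁻¹ := by
  refine mul_nonneg (by positivity) (Finset.prod_nonneg fun i _ => ?_)
  have : (2 : ℝ) ≤ D i := by exact_mod_cast hD i
  rw [inv_nonneg]
  nlinarith

lemma lurothSum_term_le {D : ℕ → ℕ} (hD : ∀ i, 2 ≤ D i) (n : ℕ) :
    (D n : ℝ)⁻¹ * ∏ i ∈ Finset.range n, ((D i : ℝ) * ((D i : ℝ) - 1))⁻¹ ≤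
      1 / 2 * (1 / 2) ^ n := by
  have hD' : ∀ i, (2 : ℝ) ≤ D i := fun i => by exact_mod_cast hD i
  refine mul_le_mul ?_ ?_ (Finset.prod_nonneg fun i _ => ?_) (by norm_num)
  · rw [one_div]
    exact inv_anti₀ two_pos (hD' n)
  · refine (Finset.prod_le_prod (g := fun _ => (1 / 2 : ℝ)) (fun i _ => ?_)
      fun i _ => ?_).trans (by simp)
    · have := hD' i
      rw [inv_nonneg]
      nlinarith
    · have := hD' i
      rw [one_div]
      exact inv_anti₀ two_pos (by nlinarith)
  · have := hD' i
    rw [inv_nonneg]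
    nlinarith

lemma summable_lurothSum {D : ℕ → ℕ} (hD : ∀ i, 2 ≤ D i) :
    Summable fun n => (D n : ℝ)⁻¹ * ∏ i ∈ Finset.range n, ((D i : ℝ) * ((D i : ℝ) - 1))⁻¹ :=
  Summable.of_nonneg_of_le (lurothSum_term_nonneg hD) (lurothSum_term_le hD)
    (summable_geometric_two.mul_left _)

lemma lurothSum_eq {D : ℕ → ℕ} (hD : ∀ i, 2 ≤ D i) :
    lurothSum D = (D 0 : ℝ)⁻¹ +
      ((D 0 : ℝ) * ((D 0 : ℝ) - 1))⁻¹ * lurothSum fun i => D (i + 1) := by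
  unfold lurothSum
  rw [(summable_lurothSum hD).tsum_eq_zero_add, ← tsum_mul_left]
  congr 1
  · simp
  · refine tsum_congr fun n => ?_
    rw [Finset.prod_range_succ']
    ring

lemma lurothSum_mem {D : ℕ → ℕ} (hD : ∀ i, 2 ≤ D i) : lurothSum D ∈ Ioc (0 : ℝ) 1 := by
  constructor
  · refine (summable_lurothSum hD).tsum_pos (lurothSum_term_nonneg hD) 0 ?_
    have : (0 : ℝ) < D 0 := by exact_mod_cast (hD 0).trans' (by norm_num)
    simpa using this
  · have := (summable_lurothSum hD).tsum_le_tsum (lurothSum_term_le hD)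
      (summable_geometric_two.mul_left _)
    rw [tsum_mul_left, tsum_geometric_two] at this
    simpa [lurothSum] using this

lemma one_div_lt_lurothSum {D : ℕ → ℕ} (hD : ∀ i, 2 ≤ D i) : 1 / (D 0 : ℝ) < lurothSum D := by
  have h := (lurothSum_mem fun i => hD (i + 1)).1
  have h2 : (2 : ℝ) ≤ D 0 := by exact_mod_cast hD 0
  have : 0 < ((D 0 : ℝ) * ((D 0 : ℝ) - 1))⁻¹ := by
    rw [inv_pos]
    nlinarith
  rw [lurothSum_eq hD, one_div]
  have := mul_pos this h
  linarith

lemma lurothSum_le {D : ℕ → ℕ} (hD : ∀ i, 2 ≤ D i) : lurothSum D ≤ 1 / ((D 0 : ℝ) - 1) := by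
  have h := (lurothSum_mem fun i => hD (i + 1)).2
  have h2 : (2 : ℝ) ≤ D 0 := by exact_mod_cast hD 0
  have : 0 < ((D 0 : ℝ) * ((D 0 : ℝ) - 1))⁻¹ := by
    rw [inv_pos]
    nlinarith
  have e : 1 / ((D 0 : ℝ) - 1) = (D 0 : ℝ)⁻¹ + ((D 0 : ℝ) * ((D 0 : ℝ) - 1))⁻¹ * 1 := by
    have : (D 0 : ℝ) - 1 ≠ 0 := by linarith
    have : (D 0 : ℝ) ≠ 0 := by linarith
    field_simp
    ring
  rw [lurothSum_eq hD, e]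
  gcongr

lemma lurothD1_lurothSum {D : ℕ → ℕ} (hD : ∀ i, 2 ≤ D i) : lurothD1 (lurothSum D) = D 0 :=
  lurothD1_eq (hD 0) (one_div_lt_lurothSum hD) (lurothSum_le hD)

lemma lurothT_lurothSum {D : ℕ → ℕ} (hD : ∀ i, 2 ≤ D i) :
    lurothT (lurothSum D) = lurothSum fun i => D (i + 1) := by
  have h2 : (2 : ℝ) ≤ D 0 := by exact_mod_cast hD 0
  have : (D 0 : ℝ) - 1 ≠ 0 := by linarith
  have : (D 0 : ℝ) ≠ 0 := by linarith
  unfold lurothT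
  rw [lurothD1_lurothSum hD, lurothSum_eq hD]
  field_simp
  ring

lemma lurothT_iterate_lurothSum {D : ℕ → ℕ} (hD : ∀ i, 2 ≤ D i) (n : ℕ) :
    lurothT^[n] (lurothSum D) = lurothSum fun i => D (i + n) := by
  induction n with
  | zero => rfl
  | succ n ih =>
    rw [Function.iterate_succ_apply', ih, lurothT_lurothSum fun i => hD (i + n)]
    simp only [add_right_comm, add_assoc]

lemma lurothD1_iterate_lurothSum {D : ℕ → ℕ} (hD : ∀ i, 2 ≤ D i) (n : ℕ) :
    lurothD1 (lurothT^[n] (lurothSum D)) = D n := by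
  rw [lurothT_iterate_lurothSum hD, lurothD1_lurothSum fun i => hD (i + n), zero_add]

/-- Separation of two points with distinct first digits, all digits being at least `3`. -/
lemma le_abs_lurothSum_sub {D E : ℕ → ℕ} (hD : ∀ i, 3 ≤ D i) (hE : ∀ i, 3 ≤ E i) :
    |(D 0 : ℝ) - E 0| / (2 * D 0 * E 0) ≤ |lurothSum D - lurothSum E| := by
  wlog h : D 0 ≤ E 0 generalizing D E
  · have := this hE hD (le_of_not_ge h)
    rw [abs_sub_comm, abs_sub_comm (lurothSum D)]
    rwa [show (2 * (D 0 : ℝ) * E 0) = 2 * E 0 * D 0 by ring]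
  have hD' : ∀ i, 2 ≤ D i := fun i => (hD i).trans' (by norm_num)
  have hE' : ∀ i, 2 ≤ E i := fun i => (hE i).trans' (by norm_num)
  rcases h.eq_or_lt with h | h
  · simp [h]
  have h1 := one_div_lt_lurothSum hD'
  have hd : (3 : ℝ) ≤ D 0 := by exact_mod_cast hD 0
  have hd1 : (3 : ℝ) ≤ E 1 := by exact_mod_cast hE 1
  have hde : (D 0 : ℝ) + 1 ≤ E 0 := by exact_mod_cast h
  have ht : lurothSum (fun i => E (i + 1)) ≤ 1 / 2 := by
    refine (lurothSum_le fun i => hE' (i + 1)).trans ?_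
    rw [zero_add, one_div_le_one_div (by linarith) two_pos]
    linarith
  have h2 : lurothSum E ≤ 1 / (E 0 : ℝ) + 1 / 2 * (1 / (D 0 : ℝ) - 1 / E 0) := by
    rw [lurothSum_eq hE']
    have e : 1 / (D 0 : ℝ) - 1 / E 0 ≥ 1 / ((E 0 : ℝ) - 1) - 1 / E 0 := by
      gcongr
      linarith
    have e2 : ((E 0 : ℝ) * ((E 0 : ℝ) - 1))⁻¹ = 1 / ((E 0 : ℝ) - 1) - 1 / E 0 := by
      have : (E 0 : ℝ) - 1 ≠ 0 := by linarith
      have : (E 0 : ℝ) ≠ 0 := by linarith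
      field_simp
      ring
    have e3 : 0 ≤ ((E 0 : ℝ) * ((E 0 : ℝ) - 1))⁻¹ := by
      rw [inv_nonneg]
      nlinarith
    rw [e2, inv_eq_one_div]
    rw [e2] at e3
    nlinarith
  have e : |(D 0 : ℝ) - E 0| / (2 * D 0 * E 0) = 1 / 2 * (1 / (D 0 : ℝ) - 1 / E 0) := by
    rw [abs_of_neg (by linarith)]
    have : (E 0 : ℝ) ≠ 0 := by linarith
    have : (D 0 : ℝ) ≠ 0 := by linarith
    field_simp
    ring
  rw [e]
  refine le_trans ?_ (le_abs_self _)
  linarith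

/-- The remainders of the expansion of `y` in the mixed radix `N`. -/
noncomputable def radixRem (N : ℕ → ℕ) (y : ℝ) : ℕ → ℝ
  | 0 => y
  | n + 1 => Int.fract (N n * radixRem N y n)

/-- The digits of the expansion of `y` in the mixed radix `N`. -/
noncomputable def radixDigit (N : ℕ → ℕ) (y : ℝ) (n : ℕ) : ℕ := ⌊N n * radixRem N y n⌋₊

lemma radixRem_mem {N : ℕ → ℕ} {y : ℝ} (hy : y ∈ Ico (0 : ℝ) 1) (n : ℕ) :
    radixRem N y n ∈ Ico (0 : ℝ) 1 := by
  cases n with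
  | zero => exact hy
  | succ n => exact ⟨Int.fract_nonneg _, Int.fract_lt_one _⟩

lemma mul_radixRem {N : ℕ → ℕ} {y : ℝ} (hy : y ∈ Ico (0 : ℝ) 1) (n : ℕ) :
    N n * radixRem N y n = radixDigit N y n + radixRem N y (n + 1) := by
  have h : 0 ≤ N n * radixRem N y n := mul_nonneg (by positivity) (radixRem_mem hy n).1
  have := Int.floor_add_fract (N n * radixRem N y n)
  rw [radixDigit, natCast_floor_eq_intCast_floor h]
  exact this.symm

lemma radixDigit_lt {N : ℕ → ℕ} (hN : ∀ n, 3 ≤ N n) {y : ℝ} (hy : y ∈ Ico (0 : ℝ) 1) (n : ℕ) :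
    radixDigit N y n < N n := by
  have h := mul_radixRem (N := N) hy n
  have h1 := (radixRem_mem (N := N) hy n).2
  have h2 := (radixRem_mem (N := N) hy (n + 1)).1
  have h3 : (3 : ℝ) ≤ N n := by exact_mod_cast hN n
  have : (radixDigit N y n : ℝ) < N n := by nlinarith
  exact_mod_cast this

lemma abs_sub_mul_prod_eq {N : ℕ → ℕ} {y z : ℝ} (hy : y ∈ Ico (0 : ℝ) 1)
    (hz : z ∈ Ico (0 : ℝ) 1) {n : ℕ} (h : ∀ i < n, radixDigit N y i = radixDigit N z i) :
    |y - z| * ∏ i ∈ Finset.range n, (N i : ℝ) = |radixRem N y n - radixRem N z n| := by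
  induction n with
  | zero => simp [radixRem]
  | succ n ih =>
    rw [Finset.prod_range_succ, ← mul_assoc, ih fun i hi => h i (by omega)]
    have h1 := mul_radixRem (N := N) hy n
    have h2 := mul_radixRem (N := N) hz n
    rw [h n (by omega)] at h1
    nth_rewrite 1 [← abs_of_nonneg (Nat.cast_nonneg (N n) : (0 : ℝ) ≤ N n)]
    rw [← abs_mul]
    congr 1
    linarith

lemma exists_radixDigit_ne {N : ℕ → ℕ} (hN : ∀ n, 3 ≤ N n) {y z : ℝ} (hy : y ∈ Ico (0 : ℝ) 1)
    (hz : z ∈ Ico (0 : ℝ) 1) (hyz : y ≠ z) : ∃ n, radixDigit N y n ≠ radixDigit N z n := by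
  by_contra! hcon
  have hpos : 0 < |y - z| := abs_pos.2 (sub_ne_zero.2 hyz)
  obtain ⟨n, hn⟩ := pow_unbounded_of_one_lt (1 / |y - z|) (by norm_num : (1 : ℝ) < 3)
  have h := abs_sub_mul_prod_eq (N := N) hy hz (n := n) fun i _ => hcon i
  have hP : (3 : ℝ) ^ n ≤ ∏ i ∈ Finset.range n, (N i : ℝ) := by
    calc (3 : ℝ) ^ n = ∏ i ∈ Finset.range n, (3 : ℝ) := by simp
      _ ≤ _ := Finset.prod_le_prod (fun _ _ => by norm_num) fun i _ => by exact_mod_cast hN i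
  have h1 := radixRem_mem (N := N) hy n
  have h2 := radixRem_mem (N := N) hz n
  have h3 : |radixRem N y n - radixRem N z n| < 1 := by
    rw [abs_lt]
    constructor <;> linarith [h1.1, h1.2, h2.1, h2.2]
  rw [div_lt_iff₀ hpos] at hn
  nlinarith

/-- The point whose Lüroth digits are `N n` plus the mixed radix digits of `y`. -/
noncomputable def lurothOfRadix (N : ℕ → ℕ) (y : ℝ) : ℝ :=
  lurothSum fun n => N n + radixDigit N y n

lemma lurothOfRadix_holder {N : ℕ → ℕ} (hN : ∀ n, 3 ≤ N n) {s C : ℝ} (hs0 : 0 < s) (hs1 : s < 1)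
    (hC : ∀ n, (1 - s) * Real.log (N n) + s * (n * Real.log 4) ≤
      (1 - 2 * s) * ∑ i ∈ Finset.range (n + 1), Real.log (N i) + C)
    {y z : ℝ} (hy : y ∈ Ico (0 : ℝ) 1) (hz : z ∈ Ico (0 : ℝ) 1) :
    |y - z| ≤ Real.exp (Real.log 2 + s * Real.log 8 + C) *
      |lurothOfRadix N y - lurothOfRadix N z| ^ s := by
  rcases eq_or_ne y z with rfl | hyz
  · simp [Real.zero_rpow hs0.ne']
  classical
  have hex := exists_radixDigit_ne hN hy hz hyz
  set n := Nat.find hex with hn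
  have hne := Nat.find_spec hex
  rw [← hn] at hne
  have heq : ∀ i < n, radixDigit N y i = radixDigit N z i := fun i hi => by
    simpa using Nat.find_min hex hi
  set D : ℕ → ℕ := fun n => N n + radixDigit N y n with hD
  set E : ℕ → ℕ := fun n => N n + radixDigit N z n with hE
  have hD3 : ∀ i, 3 ≤ D i := fun i => (hN i).trans (Nat.le_add_right _ _)
  have hE3 : ∀ i, 3 ≤ E i := fun i => (hN i).trans (Nat.le_add_right _ _)
  have hD2 : ∀ i, 2 ≤ D i := fun i => (hD3 i).trans' (by norm_num)
  have hE2 : ∀ i, 2 ≤ E i := fun i => (hE3 i).trans' (by norm_num)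
  have hNpos : ∀ i, (0 : ℝ) < N i := fun i => by exact_mod_cast (hN i).trans' (by norm_num)
  have hDN : ∀ i, (D i : ℝ) ≤ 2 * N i := fun i => by
    have := radixDigit_lt hN hy i
    have : D i ≤ 2 * N i := by simp only [hD]; omega
    exact_mod_cast this
  have hEN : ∀ i, (E i : ℝ) ≤ 2 * N i := fun i => by
    have := radixDigit_lt hN hz i
    have : E i ≤ 2 * N i := by simp only [hE]; omega
    exact_mod_cast this
  set P := ∏ i ∈ Finset.range n, (N i : ℝ) with hP
  have hPpos : 0 < P := Finset.prod_pos fun i _ => hNpos i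
  set k : ℝ := |(radixDigit N y n : ℝ) - radixDigit N z n| with hk
  have hk1 : 1 ≤ k := by
    have : (1 : ℤ) ≤ |(radixDigit N y n : ℤ) - radixDigit N z n| :=
      Int.one_le_abs (sub_ne_zero.2 (by exact_mod_cast hne))
    have := (Int.cast_le (R := ℝ)).2 this
    push_cast at this
    exact this
  have hkN : k ≤ N n := by
    have h1 : (radixDigit N y n : ℝ) < N n := by exact_mod_cast radixDigit_lt hN hy n
    have h2 : (radixDigit N z n : ℝ) < N n := by exact_mod_cast radixDigit_lt hN hz n
    have h3 : (0 : ℝ) ≤ radixDigit N y n := by positivity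
    have h4 : (0 : ℝ) ≤ radixDigit N z n := by positivity
    rw [hk, abs_le]
    constructor <;> linarith
  have hupper : |y - z| ≤ 2 * k / (P * N n) := by
    rw [le_div_iff₀ (mul_pos hPpos (hNpos n)), ← mul_assoc, abs_sub_mul_prod_eq hy hz heq,
      show |radixRem N y n - radixRem N z n| * N n =
        |N n * radixRem N y n - N n * radixRem N z n| by
        rw [← mul_sub, abs_mul, abs_of_pos (hNpos n), mul_comm],
      mul_radixRem hy, mul_radixRem hz]
    have h1 := radixRem_mem (N := N) hy (n + 1)
    have h2 := radixRem_mem (N := N) hz (n + 1)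
    have h3 : |radixRem N y (n + 1) - radixRem N z (n + 1)| ≤ 1 := by
      rw [abs_le]
      constructor <;> linarith [h1.1, h1.2, h2.1, h2.2]
    rw [add_sub_add_comm]
    exact (abs_add_le _ _).trans (by linarith)
  have hlower : k / (8 * 4 ^ n * (P * N n) ^ 2) ≤ |lurothSum D - lurothSum E| := by
    rw [abs_sub_eq_prod (n := n) (lurothSum_mem hD2) (lurothSum_mem hE2) fun i hi => by
      rw [lurothD1_iterate_lurothSum hD2, lurothD1_iterate_lurothSum hE2]
      simp only [hD, hE, heq i hi]]
    simp only [lurothD1_iterate_lurothSum hD2]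
    rw [lurothT_iterate_lurothSum hD2, lurothT_iterate_lurothSum hE2]
    have h1 := le_abs_lurothSum_sub (fun i => hD3 (i + n)) (fun i => hE3 (i + n))
    simp only [zero_add] at h1
    have e1 : |(D n : ℝ) - E n| = k := by
      simp only [hD, hE, hk]
      push_cast
      congr 1
      ring
    rw [e1] at h1
    have h2 : k / (8 * (N n : ℝ) ^ 2) ≤ k / (2 * D n * E n) := by
      have hDn : (3 : ℝ) ≤ D n := by exact_mod_cast hD3 n
      have hEn : (3 : ℝ) ≤ E n := by exact_mod_cast hE3 n
      have := hDN n
      have := hEN n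
      refine div_le_div_of_nonneg_left (by linarith) (by positivity) ?_
      have : (D n : ℝ) * E n ≤ (2 * N n) * (2 * N n) := by gcongr
      nlinarith
    have h3 : (4 ^ n * P ^ 2)⁻¹ ≤ ∏ i ∈ Finset.range n, ((D i : ℝ) * ((D i : ℝ) - 1))⁻¹ := by
      have e : (4 ^ n * P ^ 2)⁻¹ = ∏ i ∈ Finset.range n, (4 * (N i : ℝ) ^ 2)⁻¹ := by
        rw [Finset.prod_inv_distrib, Finset.prod_mul_distrib, Finset.prod_pow]
        simp [hP]
      rw [e]
      refine Finset.prod_le_prod (fun i _ => by positivity) fun i _ => ?_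
      have hDi : (3 : ℝ) ≤ D i := by exact_mod_cast hD3 i
      have := hDN i
      refine inv_anti₀ (by nlinarith) ?_
      nlinarith
    calc k / (8 * 4 ^ n * (P * N n) ^ 2) = k / (8 * (N n : ℝ) ^ 2) * (4 ^ n * P ^ 2)⁻¹ := by
          have := (hNpos n).ne'
          field_simp
      _ ≤ _ := by
          refine mul_le_mul (h2.trans h1) h3 (by positivity) (abs_nonneg _)
  have hkpos : 0 < k := by linarith
  have hPN : 0 < P * N n := mul_pos hPpos (hNpos n)
  have hlogP : Real.log (P * N n) = ∑ i ∈ Finset.range (n + 1), Real.log (N i) := by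
    rw [hP, ← Finset.prod_range_succ, Real.log_prod fun i _ => (hNpos i).ne']
  refine hupper.trans (le_trans ?_ (mul_le_mul_of_nonneg_left
    (Real.rpow_le_rpow (by positivity) hlower hs0.le) (Real.exp_pos _).le))
  have hl1 : Real.log (2 * k / (P * N n)) = Real.log 2 + Real.log k - Real.log (P * N n) := by
    rw [Real.log_div (by positivity) hPN.ne', Real.log_mul (by norm_num) hkpos.ne']
  have hl2 : Real.log (k / (8 * 4 ^ n * (P * N n) ^ 2)) =
      Real.log k - (Real.log 8 + n * Real.log 4 + 2 * Real.log (P * N n)) := by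
    rw [Real.log_div hkpos.ne' (by positivity), Real.log_mul (by positivity)
      (pow_pos hPN 2).ne', Real.log_mul (by norm_num) (by positivity), Real.log_pow, Real.log_pow]
    norm_num
  have hq : 0 < k / (8 * 4 ^ n * (P * N n) ^ 2) :=
    div_pos hkpos (mul_pos (by positivity) (pow_pos hPN 2))
  rw [← Real.log_le_log_iff (div_pos (by positivity) hPN)
    (mul_pos (Real.exp_pos _) (Real.rpow_pos_of_pos hq _)), Real.log_mul (Real.exp_pos _).ne'
    (Real.rpow_pos_of_pos hq _).ne', Real.log_exp, Real.log_rpow hq, hl1, hl2, hlogP]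
  have h1 := hC n
  have h2 : (1 - s) * Real.log k ≤ (1 - s) * Real.log (N n) :=
    mul_le_mul_of_nonneg_left (Real.log_le_log hkpos hkN) (by linarith)
  linarith

/-- The largest sequence below `n ↦ ψ (n + 1)` whose successive ratios are at most `B`. -/
noncomputable def regularize (ψ : ℕ → ℝ) (B : ℝ) : ℕ → ℝ
  | 0 => ψ 1
  | n + 1 => min (B * regularize ψ B n) (ψ (n + 2))

lemma regularize_le (ψ : ℕ → ℝ) (B : ℝ) (n : ℕ) : regularize ψ B n ≤ ψ (n + 1) := by
  cases n with
  | zero => exact le_rfl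
  | succ n => exact min_le_right _ _

section regularize

variable {ψ : ℕ → ℝ} {B : ℝ}

lemma regularize_pos (hpos : ∀ n : ℕ, 1 ≤ n → 0 < ψ n) (hB : 1 < B) (n : ℕ) :
    0 < regularize ψ B n := by
  induction n with
  | zero => exact hpos 1 le_rfl
  | succ n ih => exact lt_min (mul_pos (by linarith) ih) (hpos _ (by omega))

lemma tendsto_regularize (hpos : ∀ n : ℕ, 1 ≤ n → 0 < ψ n) (hψ : Tendsto ψ atTop atTop)
    (hB : 1 < B) : Tendsto (regularize ψ B) atTop atTop := by
  rw [tendsto_atTop]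
  intro M
  wlog hM : 0 ≤ M generalizing M
  · exact (this 0 le_rfl).mono fun n hn => (not_le.1 hM).le.trans hn
  obtain ⟨n₀, hn₀⟩ := eventually_atTop.1 (hψ.eventually_ge_atTop M)
  have hkey : ∀ k, min M (B ^ k * regularize ψ B n₀) ≤ regularize ψ B (n₀ + k) := by
    intro k
    induction k with
    | zero => simp
    | succ k ih =>
      have h1 : M ≤ ψ (n₀ + k + 2) := hn₀ _ (by omega)
      have hpos := regularize_pos hpos hB (n₀ + k)
      change _ ≤ min (B * regularize ψ B (n₀ + k)) (ψ (n₀ + k + 2))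
      refine le_min ?_ ((min_le_left _ _).trans h1)
      rcases min_le_iff.1 ih with h | h
      · exact (min_le_left _ _).trans (by nlinarith)
      · refine (min_le_right _ _).trans ?_
        calc _ = B * (B ^ k * regularize ψ B n₀) := by ring
          _ ≤ _ := by gcongr
  have hlim : Tendsto (fun k : ℕ => B ^ k * regularize ψ B n₀) atTop atTop :=
    (tendsto_pow_atTop_atTop_of_one_lt hB).atTop_mul_const (regularize_pos hpos hB n₀)
  obtain ⟨k₀, hk₀⟩ := eventually_atTop.1 (hlim.eventually_ge_atTop M)
  refine eventually_atTop.2 ⟨n₀ + k₀, fun n hn => ?_⟩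
  obtain ⟨k, rfl⟩ := Nat.exists_eq_add_of_le ((Nat.le_add_right _ _).trans hn)
  exact (le_min le_rfl (hk₀ k (by omega))).trans (hkey k)

lemma regularize_le_sum (n : ℕ) :
    regularize ψ B n ≤ (B - 1) * ∑ i ∈ Finset.range n, regularize ψ B i + ψ 1 := by
  induction n with
  | zero => simp [regularize]
  | succ n ih =>
    have : regularize ψ B (n + 1) ≤ B * regularize ψ B n := min_le_left _ _
    rw [Finset.sum_range_succ]
    linarith

lemma frequently_regularize_eq (hpos : ∀ n : ℕ, 1 ≤ n → 0 < ψ n) {B' : ℝ} (hB' : 0 < B')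
    (hBB : B' < B) (hB : 1 < B) (h : ∃ᶠ n : ℕ in atTop, ψ n < B' ^ n) :
    ∃ᶠ n : ℕ in atTop, regularize ψ B n = ψ (n + 1) := by
  by_contra hcon
  rw [not_frequently] at hcon
  obtain ⟨n₀, hn₀⟩ := eventually_atTop.1 hcon
  have hstep : ∀ k, regularize ψ B (n₀ + k) = B ^ k * regularize ψ B n₀ := by
    intro k
    induction k with
    | zero => simp
    | succ k ih =>
      have h1 := hn₀ (n₀ + k + 1) (by omega)
      have h2 : regularize ψ B (n₀ + k + 1) = B * regularize ψ B (n₀ + k) := by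
        rcases min_choice (B * regularize ψ B (n₀ + k)) (ψ (n₀ + k + 2)) with h3 | h3
        · exact h3
        · exact absurd h3 h1
      rw [← add_assoc, h2, ih]
      ring
  set c := regularize ψ B n₀ with hc
  have hcpos : 0 < c := regularize_pos hpos hB n₀
  have hlim : Tendsto (fun n : ℕ => B ^ (n₀ + 1) * (B' / B) ^ n) atTop
      (𝓝 (B ^ (n₀ + 1) * 0)) :=
    (_root_.tendsto_pow_atTop_nhds_zero_of_lt_one (div_nonneg hB'.le (by linarith))
      ((div_lt_one (by linarith)).2 hBB)).const_mul _
  rw [mul_zero] at hlim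
  obtain ⟨n, h1, h2, h3⟩ := (h.and_eventually
    ((hlim.eventually_lt_const hcpos).and (eventually_ge_atTop (n₀ + 1)))).exists
  obtain ⟨k, rfl⟩ := Nat.exists_eq_add_of_le h3
  have h4 := regularize_le ψ B (n₀ + k)
  rw [hstep k, show n₀ + k + 1 = n₀ + 1 + k by ring] at h4
  have hBp : 0 < B ^ (n₀ + 1 + k) := pow_pos (by linarith) _
  rw [div_pow, mul_div_assoc', div_lt_iff₀ hBp] at h2
  have h5 : B ^ (n₀ + 1) * (B ^ k * c) < B ^ (n₀ + 1) * B' ^ (n₀ + 1 + k) :=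
    mul_lt_mul_of_pos_left (h4.trans_lt h1) (pow_pos (by linarith) _)
  rw [pow_add B (n₀ + 1) k] at h2
  linarith

lemma exists_regularize_bound (hpos : ∀ n : ℕ, 1 ≤ n → 0 < ψ n) (hψ : Tendsto ψ atTop atTop)
    (hB : 1 < B) {s : ℝ} (hs : 0 < s) (hsB : s * (1 + B) < 1) :
    ∃ C, ∀ n : ℕ, s * regularize ψ B n + s * (n * Real.log 4) ≤
      (1 - 2 * s) * ∑ i ∈ Finset.range n, regularize ψ B i + C := by
  set δ := 1 - s * (1 + B) with hδ
  have hδ0 : 0 < δ := by linarith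
  obtain ⟨n₀, hn₀⟩ := eventually_atTop.1
    ((tendsto_regularize hpos hψ hB).eventually_ge_atTop (s * Real.log 4 / δ))
  have hl : 0 ≤ s * Real.log 4 := mul_nonneg hs.le (Real.log_nonneg (by norm_num))
  have hlin : ∀ n : ℕ, n * (s * Real.log 4) ≤
      δ * ∑ i ∈ Finset.range n, regularize ψ B i + n₀ * (s * Real.log 4) := by
    intro n
    induction n with
    | zero => simp; positivity
    | succ n ih =>
      have hp := regularize_pos hpos hB n
      rw [Finset.sum_range_succ]
      push_cast
      rcases le_or_gt n₀ n with h | h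
      · have := hn₀ n h
        rw [div_le_iff₀ hδ0] at this
        linarith
      · have h1 : ((n : ℝ) + 1) ≤ n₀ := by exact_mod_cast h
        have h2 : 0 ≤ ∑ i ∈ Finset.range n, regularize ψ B i :=
          Finset.sum_nonneg fun i _ => (regularize_pos hpos hB i).le
        have h3 : 0 ≤ δ * (∑ i ∈ Finset.range n, regularize ψ B i + regularize ψ B n) := by
          positivity
        have := mul_le_mul_of_nonneg_right h1 hl
        linarith
  refine ⟨s * ψ 1 + n₀ * (s * Real.log 4), fun n => ?_⟩
  have h1 := mul_le_mul_of_nonneg_left (regularize_le_sum (ψ := ψ) (B := B) n) hs.le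
  have h2 := hlin n
  have e : (1 - 2 * s) * ∑ i ∈ Finset.range n, regularize ψ B i =
      δ * ∑ i ∈ Finset.range n, regularize ψ B i +
        s * ((B - 1) * ∑ i ∈ Finset.range n, regularize ψ B i) := by
    rw [hδ]; ring
  rw [e]
  linarith

end regularize

lemma limsup_eq_one_of_le_of_frequently {u v : ℕ → ℝ} (h0 : ∀ᶠ n in atTop, 0 ≤ u n)
    (hv : Tendsto v atTop (𝓝 1)) (huv : ∀ᶠ n in atTop, u n ≤ v n)
    (h1 : ∃ᶠ n in atTop, 1 ≤ u n) : limsup u atTop = 1 := by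
  have hcob : IsCoboundedUnder (· ≤ ·) atTop u :=
    (isBoundedUnder_of_eventually_ge h0).isCoboundedUnder_le
  refine le_antisymm ?_ (le_limsup_of_frequently_le h1 ?_)
  · rw [← hv.limsup_eq]
    exact limsup_le_limsup huv hcob hv.isBoundedUnder_le
  · obtain ⟨c, hc⟩ := hv.isBoundedUnder_le
    refine ⟨c, ?_⟩
    rw [eventually_map] at hc ⊢
    filter_upwards [hc, huv] with n h2 h3 using h3.trans h2

/-- The radix attached to a sequence of logarithmic sizes. -/
noncomputable def expRadix (c : ℕ → ℝ) (n : ℕ) : ℕ := ⌈Real.exp (c n)⌉₊ + 2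

lemma three_le_expRadix (c : ℕ → ℝ) (n : ℕ) : 3 ≤ expRadix c n := by
  have := Nat.ceil_pos.2 (Real.exp_pos (c n))
  unfold expRadix
  omega

lemma le_log_expRadix (c : ℕ → ℝ) (n : ℕ) : c n ≤ Real.log (expRadix c n) := by
  have h3 : (0 : ℝ) < expRadix c n := by exact_mod_cast (three_le_expRadix c n).trans' (by norm_num)
  rw [Real.le_log_iff_exp_le h3]
  have := Nat.le_ceil (Real.exp (c n))
  unfold expRadix
  push_cast
  linarith

lemma log_expRadix_le {c : ℕ → ℝ} {n : ℕ} (hc : 0 ≤ c n) :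
    Real.log (expRadix c n) ≤ c n + Real.log 4 := by
  have h3 : (0 : ℝ) < expRadix c n := by exact_mod_cast (three_le_expRadix c n).trans' (by norm_num)
  rw [Real.log_le_iff_le_exp h3, Real.exp_add, Real.exp_log (by norm_num)]
  have h1 := Nat.ceil_lt_add_one (Real.exp_pos (c n)).le
  have h2 := Real.one_le_exp hc
  unfold expRadix
  push_cast
  linarith

lemma lurothDigit_lurothOfRadix {N : ℕ → ℕ} (hN : ∀ n, 3 ≤ N n) (y : ℝ) (n : ℕ) :
    lurothDigit (n + 1) (lurothOfRadix N y) = N n + radixDigit N y n := by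
  rw [lurothDigit, Nat.add_sub_cancel, lurothOfRadix,
    lurothD1_iterate_lurothSum fun i => ((hN i).trans (Nat.le_add_right _ _)).trans' (by norm_num)]

lemma limsup_log_lurothDigit_lurothOfRadix {ψ c : ℕ → ℝ} (hpos : ∀ n : ℕ, 1 ≤ n → 0 < ψ n)
    (hψ : Tendsto ψ atTop atTop) (hc0 : ∀ n, 0 ≤ c n) (hc : ∀ n, c n ≤ ψ (n + 1))
    (hfreq : ∃ᶠ n in atTop, c n = ψ (n + 1)) {y : ℝ} (hy : y ∈ Ico (0 : ℝ) 1) :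
    limsup (fun n : ℕ => Real.log (lurothDigit n (lurothOfRadix (expRadix c) y)) / ψ n) atTop
      = 1 := by
  set x := lurothOfRadix (expRadix c) y with hx
  have hpos' : ∀ n, 0 < ψ (n + 1) := fun n => hpos _ (by omega)
  have hN : ∀ n, (0 : ℝ) < expRadix c n := fun n => by
    exact_mod_cast (three_le_expRadix c n).trans' (by norm_num)
  have hdig : ∀ n, (lurothDigit (n + 1) x : ℝ) = expRadix c n + radixDigit (expRadix c) y n :=
    fun n => by
      rw [hx, lurothDigit_lurothOfRadix (three_le_expRadix c)]
      push_cast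
      rfl
  have hlow : ∀ n, c n ≤ Real.log (lurothDigit (n + 1) x) := fun n => by
    refine (le_log_expRadix c n).trans (Real.log_le_log (hN n) ?_)
    rw [hdig]
    linarith [(Nat.cast_nonneg (radixDigit (expRadix c) y n) : (0 : ℝ) ≤ _)]
  have hup : ∀ n, Real.log (lurothDigit (n + 1) x) ≤ ψ (n + 1) + Real.log 8 := fun n => by
    have h1 : (lurothDigit (n + 1) x : ℝ) ≤ 2 * expRadix c n := by
      have : (radixDigit (expRadix c) y n : ℝ) < expRadix c n := by
        exact_mod_cast radixDigit_lt (three_le_expRadix c) hy n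
      rw [hdig]
      linarith
    have h2 : (0 : ℝ) < lurothDigit (n + 1) x := by
      rw [hdig]
      have := hN n
      positivity
    have h3 := Real.log_le_log h2 h1
    rw [Real.log_mul two_ne_zero (hN n).ne'] at h3
    have h4 := log_expRadix_le (hc0 n)
    have h5 : Real.log 8 = Real.log 2 + Real.log 4 := by
      rw [← Real.log_mul (by norm_num) (by norm_num)]
      norm_num
    linarith [hc n]
  rw [← limsup_nat_add _ 1]
  refine limsup_eq_one_of_le_of_frequently (v := fun n => 1 + Real.log 8 / ψ (n + 1))
    (Eventually.of_forall fun n => ?_) ?_ (Eventually.of_forall fun n => ?_)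
    (hfreq.mono fun n hn => ?_)
  · exact div_nonneg ((hc0 n).trans (hlow n)) (hpos' n).le
  · simpa using ((hψ.comp (tendsto_add_atTop_nat 1)).const_div_atTop (Real.log 8)).const_add 1
  · rw [div_le_iff₀ (hpos' n), add_mul, div_mul_cancel₀ _ (hpos' n).ne', one_mul]
    exact hup n
  · rw [one_le_div (hpos' n), ← hn]
    exact hlow n

lemma le_dimH_luroth_limsup {ψ : ℕ → ℝ} (hpos : ∀ n : ℕ, 1 ≤ n → 0 < ψ n)
    (hψ : Tendsto ψ atTop atTop) {B' B : ℝ} {s : NNReal} (hB' : 0 < B') (hBB : B' < B)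
    (hB : 1 < B) (h : ∃ᶠ n : ℕ in atTop, ψ n < B' ^ n) (hs : 0 < s) (hsB : s * (1 + B) < 1) :
    (s : ℝ≥0∞) ≤ dimH {x : ℝ | x ∈ Set.Ioc (0 : ℝ) 1 ∧
        Filter.limsup (fun n : ℕ => Real.log (lurothDigit n x) / ψ n) atTop = 1} := by
  have hs' : (0 : ℝ) < s := by exact_mod_cast hs
  have hs2 : 2 * (s : ℝ) < 1 := by nlinarith
  obtain ⟨C, hC⟩ := exists_regularize_bound hpos hψ hB hs' hsB
  set c := regularize ψ B with hc
  have hc0 : ∀ n, 0 ≤ c n := fun n => (regularize_pos hpos hB n).le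
  have hN := three_le_expRadix c
  have hbound : ∀ n, (1 - s) * Real.log (expRadix c n) + s * (n * Real.log 4) ≤
      (1 - 2 * s) * ∑ i ∈ Finset.range (n + 1), Real.log (expRadix c i) +
        (C + (1 - s) * Real.log 4) := by
    intro n
    have h1 : (1 - s : ℝ) * Real.log (expRadix c n) ≤ (1 - s) * (c n + Real.log 4) :=
      mul_le_mul_of_nonneg_left (log_expRadix_le (hc0 n)) (by linarith)
    have h2 : (1 - 2 * s : ℝ) * ∑ i ∈ Finset.range (n + 1), c i ≤
        (1 - 2 * s) * ∑ i ∈ Finset.range (n + 1), Real.log (expRadix c i) :=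
      mul_le_mul_of_nonneg_left (Finset.sum_le_sum fun i _ => le_log_expRadix c i) (by linarith)
    rw [Finset.sum_range_succ] at h2
    linarith [hC n]
  refine (le_dimH_image_of_abs_sub_le (g := lurothOfRadix (expRadix c))
    (C := ⟨_, (Real.exp_pos _).le⟩) hs fun y hy z hz =>
      lurothOfRadix_holder hN hs' (by linarith) hbound hy hz).trans (dimH_mono ?_)
  rintro _ ⟨y, hy, rfl⟩
  exact ⟨lurothSum_mem fun i => ((hN i).trans (Nat.le_add_right _ _)).trans' (by norm_num),
    limsup_log_lurothDigit_lurothOfRadix hpos hψ hc0 (regularize_le ψ B)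
      (frequently_regularize_eq hpos hB' hBB hB h) hy⟩

lemma log_lurothD1_nonneg (x : ℝ) : 0 ≤ Real.log (lurothD1 x) := Real.log_natCast_nonneg _

lemma frequently_half_lt_log_lurothD1 {ψ : ℕ → ℝ} (hpos : ∀ n : ℕ, 1 ≤ n → 0 < ψ n) {x : ℝ}
    (hx : limsup (fun n : ℕ => Real.log (lurothDigit n x) / ψ n) atTop = 1) :
    ∃ᶠ n : ℕ in atTop, ψ (n + 1) / 2 < Real.log (lurothD1 (lurothT^[n] x)) := by
  rw [← limsup_nat_add _ 1] at hx
  have hpos' : ∀ n, 0 < ψ (n + 1) := fun n => hpos _ (by omega)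
  have h0 : ∀ᶠ n : ℕ in atTop, 0 ≤ Real.log (lurothDigit (n + 1) x) / ψ (n + 1) :=
    Eventually.of_forall fun n => div_nonneg (log_lurothD1_nonneg _) (hpos' n).le
  refine (frequently_lt_of_lt_limsup (b := 1 / 2)
    (isBoundedUnder_of_eventually_ge h0).isCoboundedUnder_le
    (by rw [hx]; norm_num)).mono fun n hn => ?_
  rw [lt_div_iff₀ (hpos' n)] at hn
  have : lurothDigit (n + 1) x = lurothD1 (lurothT^[n] x) := rfl
  rw [this] at hn
  linarith

lemma dimH_luroth_limsup_le_of_pow_le {ψ : ℕ → ℝ} (hpos : ∀ n : ℕ, 1 ≤ n → 0 < ψ n)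
    {b B : ℝ} {s : NNReal} (hb : 1 < b) (hbB : b < B) (hs : 1 < (1 + b) * s)
    (h : ∀ᶠ n : ℕ in atTop, B ^ n < ψ n) :
    dimH {x : ℝ | x ∈ Set.Ioc (0 : ℝ) 1 ∧
        Filter.limsup (fun n : ℕ => Real.log (lurothDigit n x) / ψ n) atTop = 1} ≤ s := by
  refine dimH_le_of_frequently_log_lurothD1 hb.le hs (fun x hx => hx.1) fun K x hx => ?_
  refine frequently_sum_le_of_frequently_pow_le (c := 1 / 2)
    (fun n => log_lurothD1_nonneg _) hb hbB (by norm_num) ?_ K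
  refine ((frequently_half_lt_log_lurothD1 hpos hx.2).and_eventually
    ((tendsto_add_atTop_nat 1).eventually h)).mono fun n hn => ?_
  linarith [hn.1, hn.2]

lemma dimH_luroth_limsup_le_of_tendsto {ψ : ℕ → ℝ} (hpos : ∀ n : ℕ, 1 ≤ n → 0 < ψ n)
    (hfast : Tendsto (fun n : ℕ => ψ n / n) atTop atTop) {s : NNReal} (hs : 1 < 2 * (s : ℝ)) :
    dimH {x : ℝ | x ∈ Set.Ioc (0 : ℝ) 1 ∧
        Filter.limsup (fun n : ℕ => Real.log (lurothDigit n x) / ψ n) atTop = 1} ≤ s := by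
  refine dimH_le_of_frequently_log_lurothD1 (b := 1) le_rfl (by linarith)
    (fun x hx => hx.1) fun K x hx => ?_
  refine ((frequently_half_lt_log_lurothD1 hpos hx.2).and_eventually
    ((tendsto_add_atTop_nat 1).eventually
      (hfast.eventually_ge_atTop (2 * max K 0)))).mono fun n hn => ?_
  obtain ⟨h1, h2⟩ := hn
  rw [le_div_iff₀ (by positivity)] at h2
  push_cast at h2
  have h3 : K * n ≤ max K 0 * (n + 1) := by
    have := le_max_left K 0
    have := le_max_right K 0
    have : (0 : ℝ) ≤ n := n.cast_nonneg
    nlinarith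
  linarith

section growth

variable {ψ : ℕ → ℝ} {A : ℝ≥0∞}

lemma lt_pow_of_log_div_lt {B : ℝ} (hB : 0 < B) {n : ℕ} (hn : 1 ≤ n) (hpos : 0 < ψ n)
    (h : Real.log (ψ n) / n < Real.log B) : ψ n < B ^ n := by
  have hn' : (0 : ℝ) < n := by exact_mod_cast hn
  rw [div_lt_iff₀ hn', mul_comm, ← Real.log_pow] at h
  exact (Real.log_lt_log_iff hpos (pow_pos hB n)).1 h

lemma pow_lt_of_lt_log_div {B : ℝ} (hB : 0 < B) {n : ℕ} (hn : 1 ≤ n) (hpos : 0 < ψ n)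
    (h : Real.log B < Real.log (ψ n) / n) : B ^ n < ψ n := by
  have hn' : (0 : ℝ) < n := by exact_mod_cast hn
  rw [lt_div_iff₀ hn', mul_comm, ← Real.log_pow] at h
  exact (Real.log_lt_log_iff (pow_pos hB n) hpos).1 h

lemma one_le_of_log_eq_liminf (hψ : Tendsto ψ atTop atTop)
    (hA : ENNReal.log A =
      Filter.liminf (fun n : ℕ => ((Real.log (ψ n) / n : ℝ) : EReal)) atTop) : 1 ≤ A := by
  rw [← ENNReal.zero_le_log_iff, hA]
  refine le_liminf_of_le (by isBoundedDefault) ?_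
  filter_upwards [hψ.eventually_ge_atTop 1] with n hn
  exact_mod_cast div_nonneg (Real.log_nonneg hn) n.cast_nonneg

lemma frequently_lt_pow (hpos : ∀ n : ℕ, 1 ≤ n → 0 < ψ n)
    (hA : ENNReal.log A =
      Filter.liminf (fun n : ℕ => ((Real.log (ψ n) / n : ℝ) : EReal)) atTop)
    {B : ℝ} (hB : 0 < B) (hAB : A < ENNReal.ofReal B) : ∃ᶠ n : ℕ in atTop, ψ n < B ^ n := by
  have h1 := ENNReal.log_lt_log hAB
  rw [ENNReal.log_ofReal_of_pos hB, hA] at h1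
  refine ((frequently_lt_of_liminf_lt (by isBoundedDefault) h1).and_eventually
    (eventually_ge_atTop 1)).mono fun n hn => ?_
  exact lt_pow_of_log_div_lt hB hn.2 (hpos n hn.2) (by exact_mod_cast hn.1)

lemma eventually_pow_lt (hpos : ∀ n : ℕ, 1 ≤ n → 0 < ψ n)
    (hA : ENNReal.log A =
      Filter.liminf (fun n : ℕ => ((Real.log (ψ n) / n : ℝ) : EReal)) atTop)
    {B : ℝ} (hB : 0 < B) (hAB : ENNReal.ofReal B < A) : ∀ᶠ n : ℕ in atTop, B ^ n < ψ n := by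
  have h1 := ENNReal.log_lt_log hAB
  rw [ENNReal.log_ofReal_of_pos hB, hA] at h1
  filter_upwards [eventually_lt_of_lt_liminf h1, eventually_ge_atTop 1] with n hn hn1
  exact pow_lt_of_lt_log_div hB hn1 (hpos n hn1) (by exact_mod_cast hn)

end growth

theorem dimH_luroth_Esup_psi_fast (ψ : ℕ → ℝ) (hpos : ∀ n : ℕ, 1 ≤ n → 0 < ψ n)
    (hψ : Tendsto ψ atTop atTop)
    (hfast : Tendsto (fun n : ℕ => ψ n / n) atTop atTop) (A : ℝ≥0∞)
    (hA : ENNReal.log A =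
      Filter.liminf (fun n : ℕ => ((Real.log (ψ n) / n : ℝ) : EReal)) atTop) :
    dimH {x : ℝ | x ∈ Set.Ioc (0 : ℝ) 1 ∧
        Filter.limsup (fun n : ℕ => Real.log (lurothDigit n x) / ψ n) atTop = 1}
      = 1 / (1 + A) := by
  have hA1 := one_le_of_log_eq_liminf hψ hA
  apply le_antisymm
  · refine le_of_forall_gt_imp_ge_of_dense fun t ht => ?_
    obtain ⟨s, hs, hst⟩ := ENNReal.lt_iff_exists_nnreal_btwn.1 ht
    refine le_trans ?_ hst.le
    have hs0 : (0 : ℝ) < s := by exact_mod_cast zero_le.trans_lt hs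
    rcases hA1.eq_or_lt with rfl | hA1
    · refine dimH_luroth_limsup_le_of_tendsto hpos hfast ?_
      rw [ENNReal.div_lt_iff (by simp) (by simp), one_add_one_eq_two] at hs
      rw [mul_comm]
      exact_mod_cast hs
    · have h1 : ENNReal.ofReal (max 1 (1 / s - 1)) < A := by
        rw [ENNReal.ofReal_max, max_lt_iff, ENNReal.ofReal_one]
        refine ⟨hA1, ?_⟩
        rcases eq_or_ne A ⊤ with rfl | hAtop
        · exact ENNReal.ofReal_lt_top
        · lift A to NNReal using hAtop
          rw [ENNReal.div_lt_iff (by simp) (by simp)] at hs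
          have hs' : (1 : ℝ) < s * (1 + A) := by exact_mod_cast hs
          have hA0 : (0 : ℝ) < A := by
            have : (1 : ℝ) < A := by exact_mod_cast hA1
            linarith
          rw [← ENNReal.ofReal_coe_nnreal, ENNReal.ofReal_lt_ofReal_iff hA0, sub_lt_iff_lt_add,
            div_lt_iff₀ hs0]
          linarith
      obtain ⟨B, hB1, hB2⟩ := ENNReal.lt_iff_exists_nnreal_btwn.1 h1
      have hB1' : max 1 (1 / (s : ℝ) - 1) < B := by
        rwa [ENNReal.ofReal_lt_coe_iff (by positivity)] at hB1
      obtain ⟨b, hb1, hb2⟩ := exists_between hB1'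
      rw [max_lt_iff] at hb1
      have hb : 1 / (s : ℝ) < 1 + b := by linarith [hb1.2]
      rw [div_lt_iff₀ hs0] at hb
      exact dimH_luroth_limsup_le_of_pow_le hpos hb1.1 hb2 hb
        (eventually_pow_lt hpos hA (by linarith [hb1.1]) (by simpa using hB2))
  · refine ENNReal.le_of_forall_nnreal_lt fun s hs => ?_
    rcases eq_or_ne s 0 with rfl | hs0
    · simp
    have hs0' : (0 : ℝ) < s := by exact_mod_cast hs0.bot_lt
    have hAtop : A ≠ ⊤ := by
      rintro rfl
      simp at hs
    lift A to NNReal using hAtop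
    rw [ENNReal.lt_div_iff_mul_lt (by simp) (by simp)] at hs
    have hs' : (s : ℝ) * (1 + A) < 1 := by exact_mod_cast hs
    have hA1' : (1 : ℝ) ≤ A := by exact_mod_cast hA1
    have h1 : (A : ℝ) < 1 / s - 1 := by
      rw [lt_sub_iff_add_lt, lt_div_iff₀ hs0']
      linarith
    obtain ⟨B', hB1, hB2⟩ := exists_between h1
    obtain ⟨B, hB3, hB4⟩ := exists_between hB2
    have hB5 : 1 + B < 1 / s := by linarith
    rw [lt_div_iff₀ hs0'] at hB5
    refine le_dimH_luroth_limsup hpos hψ (by linarith) hB3 (by linarith)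
      (frequently_lt_pow hpos hA (by linarith) ?_) hs0.bot_lt (by linarith)
    rw [← ENNReal.ofReal_coe_nnreal]
    exact (ENNReal.ofReal_lt_ofReal_iff (by linarith)).2 hB1
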